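/- Fix t > 0 and set r = √(t/(1+t)), r' = 1/√(1+t). The function f(K) = (η_K(t)·exp(2·((2/π)·𝒦(r)·𝒦'(r) + log(r'/r))))^{1/K} is strictly decreasing on [1, ∞), with f(1) = exp(4·𝒦(r)·𝒦'(r)/π) and f(K) → exp(2μ(r')) as K → ∞, so f maps [1, ∞) onto (exp(2μ(r')), exp(4·𝒦(r)·𝒦'(r)/π)]. In particular, for every K > 1, t·exp(2·(K·μ(r') − (2/π)·𝒦(r)·𝒦'(r))) < η_K(t) < t·exp((4/π)·(K−1)·𝒦(r)·𝒦'(r)). -/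

import Mathlib

open Set Filter

/-- Complete elliptic integral of the first kind. -/
noncomputable def ellK (r : ℝ) : ℝ :=
  ∫ θ in (0:ℝ)..(Real.pi / 2), (1 - r ^ 2 * Real.sin θ ^ 2) ^ (-(1/2) : ℝ)

/-- The Grötzsch modulus μ(r) = (π/2)·𝒦'(r)/𝒦(r). -/
noncomputable def mu (r : ℝ) : ℝ :=
  Real.pi / 2 * ellK (Real.sqrt (1 - r ^ 2)) / ellK r

/-!
In the coordinate `s = log t`, Legendre's relation gives the Grötzsch modulus
`Φ s = μ(1 / √(1 + eˢ))` the derivative `π² / (8 𝒦'²)`, so `Φ` is strictly convex with slope tending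
to `1 / 2`. The map `t ↦ η_K(t)` multiplies `Φ` by `K`. By the formula for `Φ'`, the constant
exponent `2 (⋯)` in `f` is minus the zero `N` of the tangent line to `Φ` at `ℓ = log t`,
so `log (f K) = (σ - N) / K = Φ ℓ * (σ - N) / Φ σ` with `Φ σ = K * Φ ℓ`. This is `Φ ℓ` divided by
the slope of the line from `(N, 0)` to `(σ, Φ σ)`; by convexity that slope increases with `σ`, from
`Φ' ℓ` at `σ = ℓ` to its limit `1 / 2`.
-/

section Asymptotics

open Topology Asymptotics

theorem isLittleO_id_of_tendsto_deriv_zero {E : Type*} [NormedAddCommGroup E] [NormedSpace ℝ E]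
    {g g' : ℝ → E} (hg : ∀ᶠ x in atTop, HasDerivAt g (g' x) x) (hg' : Tendsto g' atTop (𝓝 0)) :
    g =o[atTop] (id : ℝ → ℝ) := by
  refine isLittleO_iff.2 fun ε hε => ?_
  have hsmall : ∀ᶠ x in atTop, ‖g' x‖ ≤ ε / 2 :=
    (tendsto_zero_iff_norm_tendsto_zero.1 hg').eventually_le_const (half_pos hε)
  obtain ⟨T, hT⟩ := eventually_atTop.1 (hg.and hsmall)
  filter_upwards [eventually_ge_atTop T, eventually_ge_atTop 0,
    eventually_ge_atTop (2 * (‖g T‖ - ε / 2 * T) / ε)] with x hTx hx hlarge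
  have hmvt : ‖g x - g T‖ ≤ ε / 2 * ‖x - T‖ :=
    (convex_Ici T).norm_image_sub_le_of_norm_hasDerivWithin_le
      (fun y hy => (hT y hy).1.hasDerivWithinAt) (fun y hy => (hT y hy).2) self_mem_Ici hTx
  rw [Real.norm_of_nonneg (sub_nonneg.2 hTx)] at hmvt
  rw [div_le_iff₀ hε] at hlarge
  rw [id, Real.norm_of_nonneg hx]
  linarith [norm_le_norm_add_norm_sub' (g x) (g T)]

theorem tendsto_div_id_of_tendsto_deriv {g g' : ℝ → ℝ} {c : ℝ}
    (hg : ∀ᶠ x in atTop, HasDerivAt g (g' x) x) (hg' : Tendsto g' atTop (𝓝 c)) :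
    Tendsto (fun x => g x / x) atTop (𝓝 c) := by
  have hsub : (fun x => g x - c * x) =o[atTop] (id : ℝ → ℝ) :=
    isLittleO_id_of_tendsto_deriv_zero
      (hg.mono fun x hx => hx.sub ((hasDerivAt_id x).const_mul c)) (by simpa using hg'.sub_const c)
  have hlim := hsub.tendsto_div_nhds_zero.add_const c
  rw [zero_add] at hlim
  refine hlim.congr' ?_
  filter_upwards [eventually_ne_atTop 0] with x hx
  simp only [id]
  field_simp
  ring

theorem image_Ici_eq_Ioc_of_strictAntiOn {α β : Type*} [ConditionallyCompleteLinearOrder α]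
    [TopologicalSpace α] [OrderTopology α] [DenselyOrdered α] [NoMaxOrder α] [LinearOrder β]
    [TopologicalSpace β] [OrderClosedTopology β] {g : α → β} {a : α} {l : β}
    (hcont : ContinuousOn g (Ici a)) (hanti : StrictAntiOn g (Ici a))
    (hlim : Tendsto g atTop (𝓝 l)) : g '' Ici a = Ioc l (g a) := by
  have : Nonempty α := ⟨a⟩
  refine Subset.antisymm ?_ (isPreconnected_Ici.intermediate_value_Ioc self_mem_Ici
    (le_principal_iff.2 (Ici_mem_atTop a)) hcont hlim)
  rintro _ ⟨x, hx, rfl⟩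
  obtain ⟨x', hxx'⟩ := exists_gt x
  have hx' : x' ∈ Ici a := (mem_Ici.1 hx).trans hxx'.le
  refine ⟨(le_of_tendsto hlim ?_).trans_lt (hanti hx hx' hxx'),
    hanti.antitoneOn self_mem_Ici hx hx⟩
  filter_upwards [eventually_ge_atTop x'] with y hy
  exact hanti.antitoneOn hx' ((mem_Ici.1 hx').trans hy) hy

end Asymptotics

section Newton

open Topology

variable {Φ : ℝ → ℝ} {ℓ s : ℝ}

theorem tangent_lt_of_strictConvexOn {S : Set ℝ} {f : ℝ → ℝ} {x y : ℝ} (hf : StrictConvexOn ℝ S f)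
    (hx : x ∈ S) (hy : y ∈ S) (hxy : x ≠ y) (hd : DifferentiableAt ℝ f x) :
    f x + deriv f x * (y - x) < f y := by
  rcases hxy.lt_or_gt with h | h
  · have := hf.deriv_lt_slope hx hy h hd
    rw [slope_def_field, lt_div_iff₀ (sub_pos.2 h)] at this
    linarith
  · have := hf.slope_lt_deriv hy hx h hd
    rw [slope_def_field, div_lt_iff₀ (sub_pos.2 h)] at this
    linarith

/-- The zero of the tangent line to `Φ` at `ℓ`, i.e. the image of `ℓ` under Newton's method. -/
noncomputable def newtonPoint (Φ : ℝ → ℝ) (ℓ : ℝ) : ℝ := ℓ - Φ ℓ / deriv Φ ℓ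

/-- The reciprocal slope of the chord from the zero of the tangent line to `Φ` at `ℓ`, a point of
the horizontal axis, to the point of the graph of `Φ` above `s`. -/
noncomputable def newtonInvSlope (Φ : ℝ → ℝ) (ℓ s : ℝ) : ℝ := (s - newtonPoint Φ ℓ) / Φ s

theorem newtonInvSlope_self (h : Φ ℓ ≠ 0) : newtonInvSlope Φ ℓ ℓ = (deriv Φ ℓ)⁻¹ := by
  rw [newtonInvSlope, newtonPoint, sub_sub_cancel, div_div_cancel_left' h]

theorem newtonPoint_lt_self (hℓ : 0 < Φ ℓ) (hℓ' : 0 < deriv Φ ℓ) : newtonPoint Φ ℓ < ℓ :=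
  sub_lt_self ℓ (div_pos hℓ hℓ')

theorem pos_of_strictConvexOn_Ici (hΦ : StrictConvexOn ℝ (Ici ℓ) Φ)
    (hd : DifferentiableAt ℝ Φ ℓ) (hℓ : 0 < Φ ℓ) (hℓ' : 0 < deriv Φ ℓ) (hs : ℓ ≤ s) : 0 < Φ s := by
  rcases hs.eq_or_lt with rfl | hlt
  · exact hℓ
  · exact (add_pos hℓ (mul_pos hℓ' (sub_pos.2 hlt))).trans
      (tangent_lt_of_strictConvexOn hΦ self_mem_Ici hs hlt.ne hd)

theorem le_deriv_mul_sub_newtonPoint (hΦ : StrictConvexOn ℝ (Ici ℓ) Φ)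
    (hd : ∀ x ∈ Ici ℓ, DifferentiableAt ℝ Φ x) (hℓ : 0 < Φ ℓ) (hℓ' : 0 < deriv Φ ℓ) (hs : ℓ ≤ s) :
    Φ s ≤ deriv Φ s * (s - newtonPoint Φ ℓ) := by
  have hzero : deriv Φ ℓ * (ℓ - newtonPoint Φ ℓ) = Φ ℓ := by
    rw [newtonPoint, sub_sub_cancel, mul_div_cancel₀ _ hℓ'.ne']
  rcases hs.eq_or_lt with rfl | hlt
  · exact hzero.ge
  have htangent := tangent_lt_of_strictConvexOn hΦ hs self_mem_Ici hlt.ne' (hd s hs)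
  have hderiv : deriv Φ ℓ ≤ deriv Φ s :=
    (hΦ.strictMonoOn_deriv hd self_mem_Ici hs hlt).le
  have := mul_le_mul_of_nonneg_right hderiv (sub_pos.2 (newtonPoint_lt_self hℓ hℓ')).le
  linarith

theorem newtonInvSlope_strictAntiOn (hΦ : StrictConvexOn ℝ (Ici ℓ) Φ)
    (hd : ∀ x ∈ Ici ℓ, DifferentiableAt ℝ Φ x) (hℓ : 0 < Φ ℓ) (hℓ' : 0 < deriv Φ ℓ) :
    StrictAntiOn (newtonInvSlope Φ ℓ) (Ici ℓ) := by
  intro x hx y hy hxy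
  have hpos : ∀ {s}, ℓ ≤ s → 0 < Φ s :=
    pos_of_strictConvexOn_Ici hΦ (hd ℓ self_mem_Ici) hℓ hℓ'
  have hz : 0 < x - newtonPoint Φ ℓ :=
    sub_pos.2 ((newtonPoint_lt_self hℓ hℓ').trans_le hx)
  rw [newtonInvSlope, newtonInvSlope, div_lt_div_iff₀ (hpos hy) (hpos hx)]
  calc (y - newtonPoint Φ ℓ) * Φ x
      = Φ x * (x - newtonPoint Φ ℓ) + Φ x * (y - x) := by ring
    _ ≤ Φ x * (x - newtonPoint Φ ℓ) + deriv Φ x * (x - newtonPoint Φ ℓ) * (y - x) := by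
      gcongr
      exact le_deriv_mul_sub_newtonPoint hΦ hd hℓ hℓ' hx
    _ = (x - newtonPoint Φ ℓ) * (Φ x + deriv Φ x * (y - x)) := by ring
    _ < (x - newtonPoint Φ ℓ) * Φ y := by
      gcongr
      exact tangent_lt_of_strictConvexOn hΦ hx hy hxy.ne (hd x hx)

theorem tendsto_newtonInvSlope {c : ℝ} (hd : ∀ᶠ x in atTop, DifferentiableAt ℝ Φ x) (hc : c ≠ 0)
    (hlim : Tendsto (deriv Φ) atTop (𝓝 c)) :
    Tendsto (newtonInvSlope Φ ℓ) atTop (𝓝 c⁻¹) := by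
  have hslope : Tendsto (fun s => Φ s / s) atTop (𝓝 c) :=
    tendsto_div_id_of_tendsto_deriv (hd.mono fun x hx => hx.hasDerivAt) hlim
  have hshift : Tendsto (fun s => 1 - newtonPoint Φ ℓ / s) atTop (𝓝 1) := by
    simpa using (tendsto_id.const_div_atTop (newtonPoint Φ ℓ)).const_sub 1
  refine (one_div c ▸ hshift.div hslope hc).congr' ?_
  filter_upwards [eventually_ne_atTop 0] with s hs
  rw [Pi.div_apply, newtonInvSlope, one_sub_div hs, div_div_div_cancel_right₀ hs]

theorem newtonInvSlope_image_Ici {c : ℝ} (hΦ : StrictConvexOn ℝ (Ici ℓ) Φ)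
    (hd : ∀ x ∈ Ici ℓ, DifferentiableAt ℝ Φ x) (hℓ : 0 < Φ ℓ) (hℓ' : 0 < deriv Φ ℓ) (hc : c ≠ 0)
    (hlim : Tendsto (deriv Φ) atTop (𝓝 c)) :
    newtonInvSlope Φ ℓ '' Ici ℓ = Ioc c⁻¹ (deriv Φ ℓ)⁻¹ := by
  rw [← newtonInvSlope_self hℓ.ne']
  refine image_Ici_eq_Ioc_of_strictAntiOn ?_ (newtonInvSlope_strictAntiOn hΦ hd hℓ hℓ')
    (tendsto_newtonInvSlope ((eventually_ge_atTop ℓ).mono hd) hc hlim)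
  exact (continuousOn_id.sub continuousOn_const).div
    (fun x hx => (hd x hx).continuousAt.continuousWithinAt)
    fun x hx => (pos_of_strictConvexOn_Ici hΦ (hd ℓ self_mem_Ici) hℓ hℓ' hx).ne'

end Newton

section Reparametrization

open Topology

variable {Φ σ : ℝ → ℝ} {ℓ : ℝ}

theorem strictMonoOn_of_scaling (hmono : StrictMono Φ) (hℓ : 0 < Φ ℓ)
    (hσ : ∀ K ∈ Ici (1 : ℝ), Φ (σ K) = K * Φ ℓ) : StrictMonoOn σ (Ici 1) := by
  intro K hK L hL hKL
  rw [← hmono.lt_iff_lt, hσ K hK, hσ L hL]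
  gcongr

theorem image_Ici_of_scaling (hmono : StrictMono Φ) (hℓ : 0 < Φ ℓ)
    (hσ : ∀ K ∈ Ici (1 : ℝ), Φ (σ K) = K * Φ ℓ) : σ '' Ici 1 = Ici ℓ := by
  ext s
  constructor
  · rintro ⟨K, hK, rfl⟩
    rw [mem_Ici, ← hmono.le_iff_le, hσ K hK]
    exact le_mul_of_one_le_left hℓ.le hK
  · intro hs
    have hK : Φ s / Φ ℓ ∈ Ici 1 := (one_le_div hℓ).2 (hmono.monotone hs)
    exact ⟨Φ s / Φ ℓ, hK, hmono.injective (by rw [hσ _ hK, div_mul_cancel₀ _ hℓ.ne'])⟩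

theorem tendsto_atTop_of_scaling (hmono : StrictMono Φ) (hℓ : 0 < Φ ℓ)
    (hσ : ∀ K ∈ Ici (1 : ℝ), Φ (σ K) = K * Φ ℓ) : Tendsto σ atTop atTop := by
  refine tendsto_atTop.2 fun b => ?_
  filter_upwards [eventually_ge_atTop 1, eventually_ge_atTop (Φ b / Φ ℓ)] with K hK hb
  rw [← hmono.le_iff_le, hσ K hK]
  exact (div_le_iff₀ hℓ).1 hb

theorem sub_newtonPoint_div (hℓ : 0 < Φ ℓ)
    (hσ : ∀ K ∈ Ici (1 : ℝ), Φ (σ K) = K * Φ ℓ) :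
    EqOn (fun K => (σ K - newtonPoint Φ ℓ) / K) (fun K => Φ ℓ * newtonInvSlope Φ ℓ (σ K))
      (Ici 1) := by
  intro K hK
  have hK₀ : K ≠ 0 := (one_pos.trans_le hK).ne'
  simp only [newtonInvSlope, hσ K hK]
  field_simp

theorem sub_newtonPoint_div_strictAntiOn (hconv : StrictConvexOn ℝ (Ici ℓ) Φ)
    (hd : ∀ x ∈ Ici ℓ, DifferentiableAt ℝ Φ x) (hmono : StrictMono Φ) (hℓ : 0 < Φ ℓ)
    (hℓ' : 0 < deriv Φ ℓ) (hσ : ∀ K ∈ Ici (1 : ℝ), Φ (σ K) = K * Φ ℓ) :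
    StrictAntiOn (fun K => (σ K - newtonPoint Φ ℓ) / K) (Ici 1) := by
  have hmaps : MapsTo σ (Ici 1) (Ici ℓ) := mapsTo_iff_image_subset.2
    (image_Ici_of_scaling hmono hℓ hσ).subset
  have hanti : StrictAntiOn (newtonInvSlope Φ ℓ ∘ σ) (Ici 1) :=
    (newtonInvSlope_strictAntiOn hconv hd hℓ hℓ').comp_strictMonoOn
      (strictMonoOn_of_scaling hmono hℓ hσ) hmaps
  exact ((strictMono_mul_left_of_pos hℓ).comp_strictAntiOn hanti).congr
    (sub_newtonPoint_div hℓ hσ).symm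

theorem tendsto_sub_newtonPoint_div {c : ℝ} (hd : ∀ᶠ x in atTop, DifferentiableAt ℝ Φ x)
    (hmono : StrictMono Φ) (hℓ : 0 < Φ ℓ) (hc : c ≠ 0) (hlim : Tendsto (deriv Φ) atTop (𝓝 c))
    (hσ : ∀ K ∈ Ici (1 : ℝ), Φ (σ K) = K * Φ ℓ) :
    Tendsto (fun K => (σ K - newtonPoint Φ ℓ) / K) atTop (𝓝 (Φ ℓ / c)) :=
  (((tendsto_newtonInvSlope hd hc hlim).comp (tendsto_atTop_of_scaling hmono hℓ hσ)).const_mul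
    (Φ ℓ)).congr' ((sub_newtonPoint_div hℓ hσ).symm.eventuallyEq_of_mem (Ici_mem_atTop 1))

theorem sub_newtonPoint_div_image_Ici {c : ℝ} (hconv : StrictConvexOn ℝ (Ici ℓ) Φ)
    (hd : ∀ x ∈ Ici ℓ, DifferentiableAt ℝ Φ x) (hmono : StrictMono Φ) (hℓ : 0 < Φ ℓ)
    (hℓ' : 0 < deriv Φ ℓ) (hc : c ≠ 0) (hlim : Tendsto (deriv Φ) atTop (𝓝 c))
    (hσ : ∀ K ∈ Ici (1 : ℝ), Φ (σ K) = K * Φ ℓ) :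
    (fun K => (σ K - newtonPoint Φ ℓ) / K) '' Ici 1 = Ioc (Φ ℓ / c) (Φ ℓ / deriv Φ ℓ) := by
  rw [(sub_newtonPoint_div hℓ hσ).image_eq, div_eq_mul_inv, div_eq_mul_inv,
    ← image_mul_left_Ioc hℓ, ← newtonInvSlope_image_Ici hconv hd hℓ hℓ' hc hlim,
    ← image_Ici_of_scaling hmono hℓ hσ, image_image, image_image]

theorem sub_newtonPoint_div_one (hmono : StrictMono Φ) (hσ : Φ (σ 1) = 1 * Φ ℓ) :
    (σ 1 - newtonPoint Φ ℓ) / 1 = Φ ℓ / deriv Φ ℓ := by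
  have hσ₁ : σ 1 = ℓ := hmono.injective (hσ.trans (one_mul _))
  rw [div_one, hσ₁, newtonPoint, sub_sub_cancel]

theorem mem_Ioo_of_scaling {c K : ℝ} (hconv : StrictConvexOn ℝ (Ici ℓ) Φ)
    (hd : ∀ x ∈ Ici ℓ, DifferentiableAt ℝ Φ x) (hmono : StrictMono Φ) (hℓ : 0 < Φ ℓ)
    (hℓ' : 0 < deriv Φ ℓ) (hc : c ≠ 0) (hlim : Tendsto (deriv Φ) atTop (𝓝 c))
    (hσ : ∀ K ∈ Ici (1 : ℝ), Φ (σ K) = K * Φ ℓ) (hK : 1 < K) :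
    σ K ∈ Ioo (newtonPoint Φ ℓ + K * (Φ ℓ / c)) (newtonPoint Φ ℓ + K * (Φ ℓ / deriv Φ ℓ)) := by
  have hK₀ : 0 < K := one_pos.trans hK
  have hlower : Φ ℓ / c < (σ K - newtonPoint Φ ℓ) / K :=
    ((sub_newtonPoint_div_image_Ici hconv hd hmono hℓ hℓ' hc hlim hσ).subset
      (mem_image_of_mem _ hK.le)).1
  have hupper : (σ K - newtonPoint Φ ℓ) / K < Φ ℓ / deriv Φ ℓ := by
    rw [← sub_newtonPoint_div_one hmono (hσ 1 self_mem_Ici)]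
    exact sub_newtonPoint_div_strictAntiOn hconv hd hmono hℓ hℓ' hσ self_mem_Ici hK.le hK
  rw [lt_div_iff₀ hK₀] at hlower
  rw [div_lt_iff₀ hK₀] at hupper
  constructor <;> linarith

end Reparametrization

section ParametricIntegral

open Topology MeasureTheory

theorem hasDerivAt_intervalIntegral_of_continuousOn {E : Type*} [NormedAddCommGroup E]
    [NormedSpace ℝ E] {F F' : ℝ → ℝ → E} {U : Set ℝ} {a b x₀ : ℝ} (hU : U ∈ 𝓝 x₀)
    (hF : ∀ x ∈ U, ContinuousOn (F x) (uIcc a b))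
    (hF' : ContinuousOn (Function.uncurry F') (U ×ˢ uIcc a b))
    (hd : ∀ x ∈ U, ∀ θ ∈ uIcc a b, HasDerivAt (fun y => F y θ) (F' x θ) x) :
    HasDerivAt (fun x => ∫ θ in a..b, F x θ) (∫ θ in a..b, F' x₀ θ) x₀ := by
  obtain ⟨V, hV, hVU, hVc⟩ := local_compact_nhds hU
  obtain ⟨C, hC⟩ := (hVc.prod isCompact_uIcc).exists_bound_of_continuousOn
    (hF'.mono (prod_mono hVU Subset.rfl))
  have hF'₀ : ContinuousOn (F' x₀) (uIcc a b) :=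
    hF'.comp (Continuous.prodMk_right x₀).continuousOn fun θ hθ => ⟨mem_of_mem_nhds hU, hθ⟩
  refine (intervalIntegral.hasDerivAt_integral_of_dominated_loc_of_deriv_le (bound := fun _ => C)
    hV ?_ (hF x₀ (mem_of_mem_nhds hU)).intervalIntegrable
    hF'₀.intervalIntegrable.def'.aestronglyMeasurable ?_ intervalIntegrable_const ?_).2
  · filter_upwards [hU] with x hx
    exact (hF x hx).intervalIntegrable.def'.aestronglyMeasurable
  · exact ae_of_all _ fun θ hθ x hx => hC (x, θ) ⟨hx, uIoc_subset_uIcc hθ⟩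
  · exact ae_of_all _ fun θ hθ x hx => hd x (hVU hx) θ (uIoc_subset_uIcc hθ)

end ParametricIntegral

section EllipticIntegral

open Real

variable {p q m : ℝ}

/-- The integral of `Δ ^ p`, where `Δ = 1 - m sin² θ`, over the quarter period. It interpolates
between the complete elliptic integrals of the first (`p = -1/2`) and the second kind (`p = 1/2`).
Here `m = r²` is the parameter, not the modulus `r`. -/
noncomputable def ellipticIntegral (p m : ℝ) : ℝ :=
  ∫ θ in (0 : ℝ)..(π / 2), (1 - m * sin θ ^ 2) ^ p

theorem one_sub_le_one_sub_mul_sin_sq (hm : 0 ≤ m) (θ : ℝ) : 1 - m ≤ 1 - m * sin θ ^ 2 :=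
  sub_le_sub_left (mul_le_of_le_one_right hm (sin_sq_le_one θ)) 1

theorem one_sub_mul_sin_sq_pos (hm : m < 1) (θ : ℝ) : 0 < 1 - m * sin θ ^ 2 := by
  rcases le_total 0 m with h | h
  · exact (sub_pos.2 hm).trans_le (one_sub_le_one_sub_mul_sin_sq h θ)
  · exact sub_pos.2 ((mul_nonpos_of_nonpos_of_nonneg h (sq_nonneg _)).trans_lt one_pos)

theorem continuous_one_sub_mul_sin_sq_rpow (p : ℝ) (hm : m < 1) :
    Continuous fun θ => (1 - m * sin θ ^ 2) ^ p :=
  Continuous.rpow_const (by fun_prop) fun θ => Or.inl (one_sub_mul_sin_sq_pos hm θ).ne'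

theorem intervalIntegrable_one_sub_mul_sin_sq_rpow (p : ℝ) (hm : m < 1) (a b : ℝ) :
    IntervalIntegrable (fun θ => (1 - m * sin θ ^ 2) ^ p) MeasureTheory.volume a b :=
  (continuous_one_sub_mul_sin_sq_rpow p hm).intervalIntegrable a b

theorem ellipticIntegral_zero_right (p : ℝ) : ellipticIntegral p 0 = π / 2 := by
  simp [ellipticIntegral]

theorem ellipticIntegral_pos (p : ℝ) (hm : m < 1) : 0 < ellipticIntegral p m :=
  intervalIntegral.intervalIntegral_pos_of_pos (intervalIntegrable_one_sub_mul_sin_sq_rpow p hm _ _)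
    (fun θ => rpow_pos_of_pos (one_sub_mul_sin_sq_pos hm θ) p) pi_div_two_pos

theorem ellipticIntegral_lt_of_lt (hpq : p < q) (hm₀ : 0 < m) (hm₁ : m < 1) :
    ellipticIntegral q m < ellipticIntegral p m := by
  refine intervalIntegral.integral_lt_integral_of_continuousOn_of_le_of_exists_lt pi_div_two_pos
    (continuous_one_sub_mul_sin_sq_rpow q hm₁).continuousOn
    (continuous_one_sub_mul_sin_sq_rpow p hm₁).continuousOn (fun θ _ => ?_)
    ⟨π / 2, right_mem_Icc.2 pi_div_two_pos.le, ?_⟩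
  · exact rpow_le_rpow_of_exponent_ge (one_sub_mul_sin_sq_pos hm₁ θ)
      (sub_le_self 1 (by positivity)) hpq.le
  · rw [sin_pi_div_two, one_pow, mul_one]
    exact rpow_lt_rpow_of_exponent_gt (sub_pos.2 hm₁) (sub_lt_self 1 hm₀) hpq

theorem ellipticIntegral_le_of_nonpos (hp : p ≤ 0) (hm₀ : 0 ≤ m) (hm₁ : m < 1) :
    ellipticIntegral p m ≤ π / 2 * (1 - m) ^ p := by
  have hbound : ∫ _ in (0 : ℝ)..(π / 2), (1 - m) ^ p = π / 2 * (1 - m) ^ p := by simp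
  rw [← hbound]
  exact intervalIntegral.integral_mono_on pi_div_two_pos.le
    (intervalIntegrable_one_sub_mul_sin_sq_rpow p hm₁ _ _) intervalIntegrable_const fun θ _ =>
      rpow_le_rpow_of_nonpos (sub_pos.2 hm₁) (one_sub_le_one_sub_mul_sin_sq hm₀ θ) hp

theorem continuous_ellipticIntegral_of_nonneg (hp : 0 ≤ p) : Continuous (ellipticIntegral p) :=
  intervalIntegral.continuous_parametric_intervalIntegral_of_continuous'
    (Continuous.rpow_const (by fun_prop) fun _ => Or.inr hp) _ _

theorem hasDerivAt_ellipticIntegral (p : ℝ) (hm : m < 1) :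
    HasDerivAt (ellipticIntegral p)
      (-p * ∫ θ in (0 : ℝ)..(π / 2), sin θ ^ 2 * (1 - m * sin θ ^ 2) ^ (p - 1)) m := by
  rw [← intervalIntegral.integral_const_mul]
  refine hasDerivAt_intervalIntegral_of_continuousOn (U := Iio 1)
    (F := fun m θ => (1 - m * sin θ ^ 2) ^ p)
    (F' := fun m θ => -p * (sin θ ^ 2 * (1 - m * sin θ ^ 2) ^ (p - 1))) (Iio_mem_nhds hm)
    (fun x hx => (continuous_one_sub_mul_sin_sq_rpow p hx).continuousOn) ?_ fun x hx θ _ => ?_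
  · refine continuousOn_const.mul (ContinuousOn.mul (by fun_prop)
      (ContinuousOn.rpow_const (by fun_prop) ?_))
    exact fun x hx => Or.inl (one_sub_mul_sin_sq_pos hx.1 x.2).ne'
  · have hbase : HasDerivAt (fun x => 1 - x * sin θ ^ 2) (-(sin θ ^ 2)) x := by
      simpa using ((hasDerivAt_id x).mul_const (sin θ ^ 2)).const_sub 1
    exact (hbase.rpow_const (Or.inl (one_sub_mul_sin_sq_pos hx θ).ne')).congr_deriv (by ring)

theorem mul_integral_sin_sq_mul_rpow_sub_one (p : ℝ) (hm : m < 1) :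
    m * ∫ θ in (0 : ℝ)..(π / 2), sin θ ^ 2 * (1 - m * sin θ ^ 2) ^ (p - 1)
      = ellipticIntegral (p - 1) m - ellipticIntegral p m := by
  rw [ellipticIntegral, ellipticIntegral, ← intervalIntegral.integral_const_mul,
    ← intervalIntegral.integral_sub (intervalIntegrable_one_sub_mul_sin_sq_rpow _ hm _ _)
      (intervalIntegrable_one_sub_mul_sin_sq_rpow _ hm _ _)]
  refine intervalIntegral.integral_congr fun θ _ => ?_
  have hΔ := rpow_sub_one (one_sub_mul_sin_sq_pos hm θ).ne' p
  rw [eq_div_iff (one_sub_mul_sin_sq_pos hm θ).ne'] at hΔ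
  linear_combination -hΔ

theorem hasDerivAt_ellipticIntegral_of_ne_zero (p : ℝ) (hm₀ : m ≠ 0) (hm₁ : m < 1) :
    HasDerivAt (ellipticIntegral p)
      (p * (ellipticIntegral p m - ellipticIntegral (p - 1) m) / m) m := by
  convert hasDerivAt_ellipticIntegral p hm₁ using 1
  rw [div_eq_iff hm₀]
  linear_combination p * mul_integral_sin_sq_mul_rpow_sub_one p hm₁

theorem hasDerivAt_sin_mul_cos_mul_rpow (p : ℝ) (hm : m < 1) (θ : ℝ) :
    HasDerivAt (fun θ => m * (sin θ * cos θ * (1 - m * sin θ ^ 2) ^ p))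
      (2 * (p + 1) * (1 - m * sin θ ^ 2) ^ (p + 1)
        + 2 * p * (1 - m) * (1 - m * sin θ ^ 2) ^ (p - 1)
        - (2 * p + 1) * (2 - m) * (1 - m * sin θ ^ 2) ^ p) θ := by
  have hΔ := one_sub_mul_sin_sq_pos hm θ
  have hbase : HasDerivAt (fun θ => 1 - m * sin θ ^ 2) (-(m * (2 * sin θ * cos θ))) θ := by
    simpa using (((hasDerivAt_sin θ).pow 2).const_mul m).const_sub 1
  refine ((((hasDerivAt_sin θ).mul (hasDerivAt_cos θ)).mul
    (hbase.rpow_const (p := p) (Or.inl hΔ.ne'))).const_mul m).congr_deriv ?_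
  have hp : (1 - m * sin θ ^ 2) ^ p = (1 - m * sin θ ^ 2) ^ (p - 1) * (1 - m * sin θ ^ 2) := by
    rw [← rpow_add_one hΔ.ne', sub_add_cancel]
  simp only [Pi.mul_apply, rpow_add_one hΔ.ne', hp]
  generalize (1 - m * sin θ ^ 2) ^ (p - 1) = T
  have := cos_sq' θ
  linear_combination (m * T * (1 - m * sin θ ^ 2) - 2 * m ^ 2 * p * T * sin θ ^ 2) * this

theorem ellipticIntegral_contiguous (p : ℝ) (hm : m < 1) :
    2 * (p + 1) * ellipticIntegral (p + 1) m + 2 * p * (1 - m) * ellipticIntegral (p - 1) m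
      = (2 * p + 1) * (2 - m) * ellipticIntegral p m := by
  have hint := fun q c => (intervalIntegrable_one_sub_mul_sin_sq_rpow q hm 0 (π / 2)).const_mul c
  have hFTC := intervalIntegral.integral_eq_sub_of_hasDerivAt
    (fun θ _ => hasDerivAt_sin_mul_cos_mul_rpow p hm θ)
    (((hint _ _).add (hint _ _)).sub (hint _ _))
  rw [intervalIntegral.integral_sub ((hint _ _).add (hint _ _)) (hint _ _),
    intervalIntegral.integral_add (hint _ _) (hint _ _)] at hFTC
  simp only [intervalIntegral.integral_const_mul, sin_zero, cos_pi_div_two, mul_zero, zero_mul,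
    sub_zero] at hFTC
  exact sub_eq_zero.1 hFTC

end EllipticIntegral

section Legendre

open Real Topology

variable {m : ℝ}

/-- The complete elliptic integral of the first kind as a function of the parameter `m = r²`. -/
noncomputable def ellipticK (m : ℝ) : ℝ := ellipticIntegral (-(1 / 2)) m

/-- The complete elliptic integral of the second kind as a function of the parameter `m = r²`. -/
noncomputable def ellipticE (m : ℝ) : ℝ := ellipticIntegral (1 / 2) m

theorem ellK_eq_ellipticK (r : ℝ) : ellK r = ellipticK (r ^ 2) := rfl

theorem ellipticK_zero : ellipticK 0 = π / 2 := ellipticIntegral_zero_right _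

theorem ellipticE_one : ellipticE 1 = 1 := by
  have hcos : EqOn (fun θ => (1 - 1 * sin θ ^ 2) ^ (1 / 2 : ℝ)) cos (uIcc 0 (π / 2)) := by
    intro θ hθ
    rw [uIcc_of_le pi_div_two_pos.le] at hθ
    simp only
    rw [one_mul, ← cos_sq', ← sqrt_eq_rpow,
      sqrt_sq (cos_nonneg_of_mem_Icc (Icc_subset_Icc_left (neg_nonpos.2 pi_div_two_pos.le) hθ))]
  rw [ellipticE, ellipticIntegral, intervalIntegral.integral_congr hcos, integral_cos,
    sin_pi_div_two, sin_zero, sub_zero]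

theorem ellipticK_pos (hm : m < 1) : 0 < ellipticK m := ellipticIntegral_pos _ hm

theorem ellipticK_le (hm₀ : 0 ≤ m) (hm₁ : m < 1) :
    ellipticK m ≤ π / 2 * (1 - m) ^ (-(1 / 2) : ℝ) :=
  ellipticIntegral_le_of_nonpos (by norm_num) hm₀ hm₁

theorem ellipticE_lt_ellipticK (hm : m ∈ Ioo 0 1) : ellipticE m < ellipticK m :=
  ellipticIntegral_lt_of_lt (by norm_num) hm.1 hm.2

theorem one_sub_mul_ellipticIntegral_neg_three_halves (hm : m < 1) :
    (1 - m) * ellipticIntegral (-(1 / 2) - 1) m = ellipticE m := by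
  have h := ellipticIntegral_contiguous (-(1 / 2)) hm
  rw [show (-(1 / 2) + 1 : ℝ) = 1 / 2 by norm_num] at h
  rw [ellipticE]
  linear_combination -h

theorem one_sub_mul_ellipticK_lt_ellipticE (hm : m ∈ Ioo 0 1) :
    (1 - m) * ellipticK m < ellipticE m := by
  rw [← one_sub_mul_ellipticIntegral_neg_three_halves hm.2]
  exact mul_lt_mul_of_pos_left (ellipticIntegral_lt_of_lt (by norm_num) hm.1 hm.2)
    (sub_pos.2 hm.2)

theorem continuousAt_ellipticK (hm : m < 1) : ContinuousAt ellipticK m :=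
  (hasDerivAt_ellipticIntegral _ hm).continuousAt

theorem hasDerivAt_ellipticK (hm : m ∈ Ioo 0 1) :
    HasDerivAt ellipticK ((ellipticE m - (1 - m) * ellipticK m) / (2 * m * (1 - m))) m := by
  have hm₀ : m ≠ 0 := hm.1.ne'
  have hm₁ : 1 - m ≠ 0 := (sub_pos.2 hm.2).ne'
  refine (hasDerivAt_ellipticIntegral_of_ne_zero (-(1 / 2)) hm₀ hm.2).congr_deriv ?_
  rw [← one_sub_mul_ellipticIntegral_neg_three_halves hm.2, ellipticK]
  field_simp
  ring

theorem hasDerivAt_ellipticE (hm : m ∈ Ioo 0 1) :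
    HasDerivAt ellipticE ((ellipticE m - ellipticK m) / (2 * m)) m := by
  refine (hasDerivAt_ellipticIntegral_of_ne_zero (1 / 2) hm.1.ne' hm.2).congr_deriv ?_
  rw [ellipticE, ellipticK, show (1 / 2 - 1 : ℝ) = -(1 / 2) by norm_num]
  field_simp

theorem ellipticK_strictMonoOn : StrictMonoOn ellipticK (Ioo 0 1) := by
  refine strictMonoOn_of_hasDerivWithinAt_pos (convex_Ioo 0 1)
    (fun m hm => (continuousAt_ellipticK hm.2).continuousWithinAt)
    (fun m hm => (hasDerivAt_ellipticK (interior_subset hm)).hasDerivWithinAt) fun m hm => ?_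
  obtain ⟨hm₀, hm₁⟩ := interior_subset hm
  exact div_pos (sub_pos.2 (one_sub_mul_ellipticK_lt_ellipticE ⟨hm₀, hm₁⟩))
    (mul_pos (by positivity) (sub_pos.2 hm₁))

/-- The expression `E K' + E' K - K K'`, with complementary integrals `K'` and `E'`, that
Legendre's relation asserts to be constant. -/
noncomputable def legendreForm (m : ℝ) : ℝ :=
  ellipticE m * ellipticK (1 - m) + ellipticE (1 - m) * ellipticK m
    - ellipticK m * ellipticK (1 - m)

theorem hasDerivAt_legendreForm (hm : m ∈ Ioo 0 1) : HasDerivAt legendreForm 0 m := by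
  have hm' : 1 - m ∈ Ioo (0 : ℝ) 1 := Ioo.one_sub_mem hm
  have hK := hasDerivAt_ellipticK hm
  have hE := hasDerivAt_ellipticE hm
  have hK' := (hasDerivAt_ellipticK hm').comp_const_sub 1 m
  have hE' := (hasDerivAt_ellipticE hm').comp_const_sub 1 m
  refine (((hE.mul hK').add (hE'.mul hK)).sub (hK.mul hK')).congr_deriv ?_
  have hm₀ : m ≠ 0 := hm.1.ne'
  have hm₁ : 1 - m ≠ 0 := hm'.1.ne'
  rw [sub_sub_cancel]
  field_simp
  ring

theorem tendsto_ellipticK_sub_ellipticE_mul :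
    Tendsto (fun m => (ellipticK m - ellipticE m) * ellipticK (1 - m)) (𝓝[>] 0) (𝓝 0) := by
  have hK : Tendsto ellipticK (𝓝[>] 0) (𝓝 (ellipticK 0)) :=
    (continuousAt_ellipticK one_pos).tendsto.mono_left nhdsWithin_le_nhds
  have hsqrt : Tendsto (fun m : ℝ => m ^ (1 / 2 : ℝ)) (𝓝[>] 0) (𝓝 0) := by
    have := (continuous_rpow_const (q := 1 / 2) (by norm_num)).tendsto 0
    rw [zero_rpow (by norm_num)] at this
    exact this.mono_left nhdsWithin_le_nhds
  have hbound := (hK.mul hsqrt).const_mul (π / 2)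
  rw [mul_zero, mul_zero] at hbound
  refine squeeze_zero' ?_ ?_ hbound <;> filter_upwards [Ioo_mem_nhdsGT one_pos] with m hm
  · exact mul_nonneg (sub_pos.2 (ellipticE_lt_ellipticK hm)).le
      (ellipticK_pos (sub_lt_self 1 hm.1)).le
  have hdiff : ellipticK m - ellipticE m ≤ m * ellipticK m := by
    linarith [one_sub_mul_ellipticK_lt_ellipticE hm]
  have hcompl : ellipticK (1 - m) ≤ π / 2 * m ^ (-(1 / 2) : ℝ) := by
    simpa only [sub_sub_cancel] using ellipticK_le (sub_pos.2 hm.2).le (sub_lt_self 1 hm.1)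
  calc (ellipticK m - ellipticE m) * ellipticK (1 - m)
      ≤ m * ellipticK m * (π / 2 * m ^ (-(1 / 2) : ℝ)) :=
        mul_le_mul hdiff hcompl (ellipticK_pos (sub_lt_self 1 hm.1)).le
          (mul_pos hm.1 (ellipticK_pos hm.2)).le
    _ = π / 2 * (ellipticK m * (m ^ (-(1 / 2) : ℝ) * m)) := by ring
    _ = π / 2 * (ellipticK m * m ^ (1 / 2 : ℝ)) := by
        rw [← rpow_add_one hm.1.ne']
        norm_num

theorem tendsto_legendreForm : Tendsto legendreForm (𝓝[>] 0) (𝓝 (π / 2)) := by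
  have hE' : Tendsto (fun m => ellipticE (1 - m)) (𝓝 0) (𝓝 1) := by
    have hcont : Continuous fun m => ellipticE (1 - m) :=
      (continuous_ellipticIntegral_of_nonneg one_half_pos.le).comp (by fun_prop)
    simpa only [sub_zero, ellipticE_one] using hcont.tendsto 0
  have hmain := (hE'.mul (continuousAt_ellipticK one_pos)).mono_left
    (nhdsWithin_le_nhds (s := Ioi 0))
  rw [ellipticK_zero, one_mul] at hmain
  refine (sub_zero (π / 2) ▸ hmain.sub tendsto_ellipticK_sub_ellipticE_mul).congr fun m => ?_
  rw [legendreForm]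
  ring

theorem legendre_relation (hm : m ∈ Ioo 0 1) : legendreForm m = π / 2 := by
  have hconst : ∀ x ∈ Ioo (0 : ℝ) 1, legendreForm x = legendreForm m := fun x hx =>
    isOpen_Ioo.is_const_of_deriv_eq_zero isPreconnected_Ioo
      (fun y hy => (hasDerivAt_legendreForm hy).differentiableAt.differentiableWithinAt)
      (fun y hy => (hasDerivAt_legendreForm hy).deriv) hx hm
  refine tendsto_nhds_unique (tendsto_const_nhds.congr' ?_) tendsto_legendreForm
  filter_upwards [Ioo_mem_nhdsGT one_pos] with x hx using (hconst x hx).symm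

end Legendre

section GrotzschModulus

open Real Topology

variable {s t : ℝ}

/-- The Grötzsch modulus `μ(1 / √(1 + t))` as a function of `s = log t`. In this coordinate the
modular parameters of `r` and `r'` are `sigmoid s` and `sigmoid (-s)`. -/
noncomputable def muLog (s : ℝ) : ℝ := mu (1 / √(1 + exp s))

theorem sigmoid_mem_Ioo (s : ℝ) : sigmoid s ∈ Ioo 0 1 := ⟨sigmoid_pos s, sigmoid_lt_one s⟩

theorem one_div_sqrt_one_add_exp_sq (s : ℝ) : (1 / √(1 + exp s)) ^ 2 = sigmoid (-s) := by
  rw [div_pow, sq_sqrt (by positivity), one_pow, one_div, sigmoid_def, neg_neg]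

theorem muLog_eq (s : ℝ) :
    muLog s = π / 2 * ellipticK (sigmoid s) / ellipticK (sigmoid (-s)) := by
  have hcompl : 1 - sigmoid (-s) = sigmoid s := by rw [sigmoid_neg, sub_sub_cancel]
  rw [muLog, mu, ellK_eq_ellipticK, ellK_eq_ellipticK, one_div_sqrt_one_add_exp_sq, hcompl,
    sq_sqrt (sigmoid_nonneg s)]

theorem muLog_pos (s : ℝ) : 0 < muLog s := by
  have hK : ∀ x, 0 < ellipticK (sigmoid x) := fun x => ellipticK_pos (sigmoid_lt_one x)
  rw [muLog_eq]
  exact div_pos (mul_pos pi_div_two_pos (hK s)) (hK (-s))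

theorem hasDerivAt_ellipticK_sigmoid (s : ℝ) :
    HasDerivAt (fun s => ellipticK (sigmoid s))
      ((ellipticE (sigmoid s) - sigmoid (-s) * ellipticK (sigmoid s)) / 2) s := by
  refine ((hasDerivAt_ellipticK (sigmoid_mem_Ioo s)).comp s (hasDerivAt_sigmoid s)).congr_deriv ?_
  have hs : sigmoid s ≠ 0 := (sigmoid_pos s).ne'
  have hs' : 1 - sigmoid s ≠ 0 := (sub_pos.2 (sigmoid_lt_one s)).ne'
  rw [sigmoid_neg]
  field_simp

theorem hasDerivAt_muLog (s : ℝ) :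
    HasDerivAt muLog (π ^ 2 / (8 * ellipticK (sigmoid (-s)) ^ 2)) s := by
  have hK : HasDerivAt (fun s => ellipticK (sigmoid s)) _ s := hasDerivAt_ellipticK_sigmoid s
  have hK' : HasDerivAt (fun s => ellipticK (sigmoid (-s))) _ s :=
    (hasDerivAt_ellipticK_sigmoid (-s)).comp s (hasDerivAt_neg s)
  have hK'_ne : ellipticK (sigmoid (-s)) ≠ 0 := (ellipticK_pos (sigmoid_lt_one _)).ne'
  rw [funext muLog_eq]
  refine ((hK.const_mul (π / 2)).div hK' hK'_ne).congr_deriv ?_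
  have hLegendre := legendre_relation (sigmoid_mem_Ioo s)
  rw [legendreForm, ← sigmoid_neg] at hLegendre
  rw [neg_neg]
  field_simp
  linear_combination 8 * hLegendre
    - 8 * ellipticK (sigmoid s) * ellipticK (sigmoid (-s)) * sigmoid_neg s

theorem deriv_muLog (s : ℝ) : deriv muLog s = π ^ 2 / (8 * ellipticK (sigmoid (-s)) ^ 2) :=
  (hasDerivAt_muLog s).deriv

theorem differentiable_muLog : Differentiable ℝ muLog :=
  fun s => (hasDerivAt_muLog s).differentiableAt

theorem deriv_muLog_pos (s : ℝ) : 0 < deriv muLog s := by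
  have := ellipticK_pos (sigmoid_lt_one (-s))
  rw [deriv_muLog]
  positivity

theorem muLog_strictMono : StrictMono muLog := strictMono_of_deriv_pos deriv_muLog_pos

theorem deriv_muLog_strictMono : StrictMono (deriv muLog) := by
  intro x y hxy
  have hK : ellipticK (sigmoid (-y)) < ellipticK (sigmoid (-x)) :=
    ellipticK_strictMonoOn (sigmoid_mem_Ioo _) (sigmoid_mem_Ioo _)
      (sigmoid_strictMono (neg_lt_neg hxy))
  have hpos : 0 < ellipticK (sigmoid (-y)) := ellipticK_pos (sigmoid_lt_one _)
  rw [deriv_muLog, deriv_muLog]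
  gcongr

theorem strictConvexOn_muLog : StrictConvexOn ℝ univ muLog :=
  deriv_muLog_strictMono.strictConvexOn_univ_of_deriv differentiable_muLog.continuous

theorem tendsto_deriv_muLog : Tendsto (deriv muLog) atTop (𝓝 (1 / 2)) := by
  have hK : Tendsto (fun s => ellipticK (sigmoid (-s))) atTop (𝓝 (ellipticK 0)) :=
    (continuousAt_ellipticK one_pos).tendsto.comp
      (tendsto_sigmoid_atBot.comp tendsto_neg_atTop_atBot)
  rw [ellipticK_zero] at hK
  have hlim : π ^ 2 / (8 * (π / 2) ^ 2) = 1 / 2 := by field_simp; norm_num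
  rw [funext deriv_muLog, ← hlim]
  exact tendsto_const_nhds.div ((hK.pow 2).const_mul 8) (by positivity)

theorem tendsto_muLog_atTop : Tendsto muLog atTop atTop := by
  have hslope := tendsto_div_id_of_tendsto_deriv
    (Eventually.of_forall fun s => (differentiable_muLog s).hasDerivAt) tendsto_deriv_muLog
  refine (hslope.pos_mul_atTop one_half_pos tendsto_id).congr' ?_
  filter_upwards [eventually_ne_atTop 0] with s hs using div_mul_cancel₀ _ hs

theorem muLog_log (ht : 0 < t) : muLog (log t) = mu (1 / √(1 + t)) := by
  rw [muLog, exp_log ht]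

theorem ellK_one_div_sqrt (ht : 0 < t) : ellK (1 / √(1 + t)) = ellipticK (sigmoid (-log t)) := by
  rw [ellK_eq_ellipticK, ← one_div_sqrt_one_add_exp_sq, exp_log ht]

theorem ellK_sqrt_div (ht : 0 < t) : ellK √(t / (1 + t)) = ellipticK (sigmoid (log t)) := by
  rw [ellK_eq_ellipticK, sq_sqrt (by positivity), sigmoid_def, exp_neg, exp_log ht]
  congr 1
  field_simp
  ring

theorem muLog_div_deriv (ht : 0 < t) :
    muLog (log t) / deriv muLog (log t) = 4 * ellK √(t / (1 + t)) * ellK (1 / √(1 + t)) / π := by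
  have hK' : ellipticK (sigmoid (-log t)) ≠ 0 := (ellipticK_pos (sigmoid_lt_one _)).ne'
  rw [muLog_eq, deriv_muLog, ellK_sqrt_div ht, ellK_one_div_sqrt ht]
  field_simp
  ring

theorem log_one_div_sqrt_div_sqrt (ht : 0 < t) :
    log (1 / √(1 + t) / √(t / (1 + t))) = -(log t / 2) := by
  have h : 1 / √(1 + t) / √(t / (1 + t)) = (√t)⁻¹ := by
    rw [sqrt_div ht.le]
    field_simp
  rw [h, log_inv, log_sqrt ht.le]

theorem neg_newtonPoint_muLog_log (ht : 0 < t) :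
    -newtonPoint muLog (log t) = 2 * (2 / π * ellK √(t / (1 + t)) * ellK (1 / √(1 + t)) +
      log (1 / √(1 + t) / √(t / (1 + t)))) := by
  rw [newtonPoint, muLog_div_deriv ht, log_one_div_sqrt_div_sqrt ht]
  ring

theorem strictConvexOn_muLog_Ici (ℓ : ℝ) : StrictConvexOn ℝ (Ici ℓ) muLog :=
  strictConvexOn_muLog.subset (subset_univ _) (convex_Ici ℓ)

section Scaling

variable {ℓ : ℝ} {σ : ℝ → ℝ}

theorem muLog_sub_newtonPoint_div_strictAntiOn
    (hσ : ∀ K ∈ Ici (1 : ℝ), muLog (σ K) = K * muLog ℓ) :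
    StrictAntiOn (fun K => (σ K - newtonPoint muLog ℓ) / K) (Ici 1) :=
  sub_newtonPoint_div_strictAntiOn (strictConvexOn_muLog_Ici ℓ) (fun x _ => differentiable_muLog x)
    muLog_strictMono (muLog_pos ℓ) (deriv_muLog_pos ℓ) hσ

theorem tendsto_muLog_sub_newtonPoint_div
    (hσ : ∀ K ∈ Ici (1 : ℝ), muLog (σ K) = K * muLog ℓ) :
    Tendsto (fun K => (σ K - newtonPoint muLog ℓ) / K) atTop (𝓝 (muLog ℓ / (1 / 2))) :=
  tendsto_sub_newtonPoint_div (.of_forall differentiable_muLog) muLog_strictMono (muLog_pos ℓ)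
    one_half_pos.ne' tendsto_deriv_muLog hσ

theorem muLog_sub_newtonPoint_div_image_Ici
    (hσ : ∀ K ∈ Ici (1 : ℝ), muLog (σ K) = K * muLog ℓ) :
    (fun K => (σ K - newtonPoint muLog ℓ) / K) '' Ici 1 =
      Ioc (muLog ℓ / (1 / 2)) (muLog ℓ / deriv muLog ℓ) :=
  sub_newtonPoint_div_image_Ici (strictConvexOn_muLog_Ici ℓ) (fun x _ => differentiable_muLog x)
    muLog_strictMono (muLog_pos ℓ) (deriv_muLog_pos ℓ) one_half_pos.ne' tendsto_deriv_muLog hσ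

theorem mem_Ioo_of_muLog_scaling {K : ℝ}
    (hσ : ∀ K ∈ Ici (1 : ℝ), muLog (σ K) = K * muLog ℓ) (hK : 1 < K) :
    σ K ∈ Ioo (newtonPoint muLog ℓ + K * (muLog ℓ / (1 / 2)))
      (newtonPoint muLog ℓ + K * (muLog ℓ / deriv muLog ℓ)) :=
  mem_Ioo_of_scaling (strictConvexOn_muLog_Ici ℓ) (fun x _ => differentiable_muLog x)
    muLog_strictMono (muLog_pos ℓ) (deriv_muLog_pos ℓ) one_half_pos.ne' tendsto_deriv_muLog hσ hK

theorem exp_mem_Ioo_of_muLog_scaling {K : ℝ} (ht : 0 < t)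
    (hσ : ∀ K ∈ Ici (1 : ℝ), muLog (σ K) = K * muLog (log t)) (hK : 1 < K) :
    exp (σ K) ∈ Ioo
      (t * exp (2 * (K * mu (1 / √(1 + t)) - 2 / π * ellK √(t / (1 + t)) * ellK (1 / √(1 + t)))))
      (t * exp (4 / π * (K - 1) * ellK √(t / (1 + t)) * ellK (1 / √(1 + t)))) := by
  have hexp (a : ℝ) : t * exp a = exp (log t + a) := by rw [exp_add, exp_log ht]
  obtain ⟨hlower, hupper⟩ := mem_Ioo_of_muLog_scaling hσ hK
  rw [newtonPoint, muLog_div_deriv ht] at hlower hupper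
  rw [muLog_log ht] at hlower
  rw [hexp, hexp]
  refine ⟨exp_strictMono (hlower.trans_eq' ?_), exp_strictMono (hupper.trans_eq ?_)⟩ <;> ring

end Scaling

theorem exp_mul_exp_rpow (ht : 0 < t) (s K : ℝ) :
    (exp s * exp (2 * (2 / π * ellK √(t / (1 + t)) * ellK (1 / √(1 + t)) +
      log (1 / √(1 + t) / √(t / (1 + t)))))) ^ (1 / K) =
      exp ((s - newtonPoint muLog (log t)) / K) := by
  rw [← neg_newtonPoint_muLog_log ht, ← exp_add, ← exp_mul, mul_one_div, sub_eq_add_neg]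

theorem eq_exp_of_muLog_eq {e y : ℝ} (he : ∀ u ∈ Ioo (0 : ℝ) 1, mu u = y → e = 1 / u ^ 2 - 1)
    (hs : muLog s = y) : e = exp s := by
  have hsqrt : 1 < √(1 + exp s) := lt_sqrt_of_sq_lt (by simp [exp_pos])
  have hu : 1 / √(1 + exp s) ∈ Ioo (0 : ℝ) 1 :=
    ⟨one_div_pos.2 (one_pos.trans hsqrt), (div_lt_one (one_pos.trans hsqrt)).2 hsqrt⟩
  rw [he _ hu hs, div_pow, sq_sqrt (by positivity), one_pow, one_div_one_div, add_sub_cancel_left]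

theorem exists_muLog_eq {y : ℝ} (hy : muLog s ≤ y) : ∃ x, muLog x = y := by
  obtain ⟨x, -, hx⟩ :=
    intermediate_value_Ici differentiable_muLog.continuous.continuousOn tendsto_muLog_atTop hy
  exact ⟨x, hx⟩

theorem exists_log_eta {eta : ℝ → ℝ → ℝ} (heta : ∀ K t : ℝ, 0 < K → 0 < t → ∀ u ∈ Ioo (0 : ℝ) 1,
      mu u = K * mu (1 / √(1 + t)) → eta K t = 1 / u ^ 2 - 1) (ht : 0 < t) :
    ∃ σ : ℝ → ℝ, ∀ K ∈ Ici (1 : ℝ), muLog (σ K) = K * muLog (log t) ∧ eta K t = exp (σ K) := by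
  choose! σ hσ using fun K (hK : K ∈ Ici (1 : ℝ)) =>
    exists_muLog_eq (le_mul_of_one_le_left (muLog_pos (log t)).le hK)
  refine ⟨σ, fun K hK => ⟨hσ K hK, eq_exp_of_muLog_eq ?_ (hσ K hK)⟩⟩
  rw [muLog_log ht]
  exact heta K t (one_pos.trans_le hK) ht

end GrotzschModulus

theorem stmt_19 (eta : ℝ → ℝ → ℝ)
    (heta : ∀ K t : ℝ, 0 < K → 0 < t → ∀ u ∈ Set.Ioo (0:ℝ) 1,
      mu u = K * mu (1 / Real.sqrt (1 + t)) → eta K t = 1 / u ^ 2 - 1) (t : ℝ) (ht : 0 < t) (f : ℝ → ℝ)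
    (hf : f = fun K : ℝ => (eta K t * Real.exp (2 * (2 / Real.pi *
      ellK (Real.sqrt (t / (1 + t))) * ellK (1 / Real.sqrt (1 + t)) +
      Real.log ((1 / Real.sqrt (1 + t)) / Real.sqrt (t / (1 + t)))))) ^ (1 / K)) :
    StrictAntiOn f (Set.Ici 1) ∧
    f 1 = Real.exp (4 * ellK (Real.sqrt (t / (1 + t))) * ellK (1 / Real.sqrt (1 + t)) / Real.pi) ∧
    Filter.Tendsto f Filter.atTop (nhds (Real.exp (2 * mu (1 / Real.sqrt (1 + t))))) ∧
    f '' Set.Ici 1 = Set.Ioc (Real.exp (2 * mu (1 / Real.sqrt (1 + t))))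
      (Real.exp (4 * ellK (Real.sqrt (t / (1 + t))) * ellK (1 / Real.sqrt (1 + t)) / Real.pi)) ∧
    ∀ K : ℝ, 1 < K →
      t * Real.exp (2 * (K * mu (1 / Real.sqrt (1 + t)) -
        2 / Real.pi * ellK (Real.sqrt (t / (1 + t))) * ellK (1 / Real.sqrt (1 + t)))) < eta K t ∧
      eta K t < t * Real.exp (4 / Real.pi * (K - 1) * ellK (Real.sqrt (t / (1 + t))) *
        ellK (1 / Real.sqrt (1 + t))) := by
  obtain ⟨σ, hσ_eta⟩ := exists_log_eta heta ht
  have hσ := fun K hK => (hσ_eta K hK).1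
  have heta_exp := fun K hK => (hσ_eta K hK).2
  have hlim := tendsto_muLog_sub_newtonPoint_div hσ
  have himage := muLog_sub_newtonPoint_div_image_Ici hσ
  have hv : muLog (Real.log t) / (1 / 2) = 2 * mu (1 / √(1 + t)) := by rw [muLog_log ht]; ring
  rw [hv] at hlim himage
  rw [muLog_div_deriv ht] at himage
  have hf_exp : EqOn f (fun K => Real.exp ((σ K - newtonPoint muLog (Real.log t)) / K)) (Ici 1) :=
    fun K hK => by simp only [hf, heta_exp K hK, exp_mul_exp_rpow ht]
  refine ⟨?_, ?_, ?_, ?_, fun K hK => ?_⟩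
  · exact (Real.exp_strictMono.comp_strictAntiOn
      (muLog_sub_newtonPoint_div_strictAntiOn hσ)).congr hf_exp.symm
  · refine (hf_exp self_mem_Ici).trans (congrArg Real.exp ?_)
    exact (sub_newtonPoint_div_one muLog_strictMono (hσ 1 self_mem_Ici)).trans (muLog_div_deriv ht)
  · exact ((Real.continuous_exp.tendsto _).comp hlim).congr'
      (hf_exp.symm.eventuallyEq_of_mem (Ici_mem_atTop 1))
  · rw [hf_exp.image_eq, ← image_image Real.exp, himage, Real.image_exp_Ioc]
  · rw [heta_exp K hK.le]
    exact exp_mem_Ioo_of_muLog_scaling ht hσ hK
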